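/- Suppose the parameters σ^(1)_1,…,σ^(1)_{k_1}; σ^(2)_1,…,σ^(2)_{k_2}; …; σ^(n−1)_1,…,σ^(n−1)_{k_{n−1}} (with σ^(s)_a ≠ σ^(s)_b for a ≠ b) satisfy the Bethe ansatz equations: for α = 1,…,k_1: ∏_{a=1}^{k_1}(1+β(σ^(1)_a ⊖ σ^(1)_α)) · ∏_{i=1}^{N}(σ^(1)_α ⊖ t_i) = (−1)^{k_1−1} q_1 ∏_{b=1}^{k_2}(σ^(2)_b ⊖ σ^(1)_α); for 2 ≤ m ≤ n−2 and α = 1,…,k_m: ∏_{a=1}^{k_m}(1+β(σ^(m)_a ⊖ σ^(m)_α)) · ∏_{i=1}^{k_{m−1}}(σ^(m)_α ⊖ σ^(m−1)_i) = (−1)^{k_m−1} q_m ∏_{b=1}^{k_{m+1}}(σ^(m+1)_b ⊖ σ^(m)_α); and for α = 1,…,k_{n−1}: ∏_{a=1}^{k_{n−1}}(1+β(σ^(n−1)_a ⊖ σ^(n−1)_α)) · ∏_{i=1}^{k_{n−2}}(σ^(n−1)_α ⊖ σ^(n−2)_i) = (−1)^{k_{n−1}−1} q_{n−1}. Then the nested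 Bethe ansatz state |ψ^(0)⟩ is a common eigenvector of the transfer matrices t^(n)(u) for all u, i.e. there is a scalar-valued function Λ^(0)(u) with t^(n)(u) |ψ^(0)⟩ = Λ^(0)(u) |ψ^(0)⟩ as an identity of rational functions of u. -/

import Mathlib

noncomputable section
open scoped BigOperators

variable {F : Type*}

/-- `x ⊖ y := (x - y)/(1 + β·y)`. -/
def om [Field F] (β x y : F) : F := (x - y) / (1 + β * y)

/-- `⊖ t := -t/(1 + β·t)`. -/
def negOm [Field F] (β t : F) : F := (-t) / (1 + β * t)

/-- The R-matrix `R^{(n)}(x,y)` on `V ⊗ V`, `V = F^n`, with entries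
`R_{ij,kl} = (1 + [k<l]·β(x⊖y)) δ_{il} δ_{jk} + [k>l]·(x⊖y) δ_{ik} δ_{jl}`;
the row index is the pair `(i,j)`, the column index is the pair `(k,l)`. -/
def Rmat [Field F] (n : ℕ) (β x y : F) :
    Matrix (Fin n × Fin n) (Fin n × Fin n) F := Matrix.of fun p q =>
  (if p.1 = q.2 ∧ p.2 = q.1 then (if q.1 < q.2 then 1 + β * om β x y else 1) else 0) +
  (if p.1 = q.1 ∧ p.2 = q.2 ∧ q.2 < q.1 then om β x y else 0)

/-- `R_{a i}(u, τ)` : the R-matrix acting on the auxiliary space (first factor)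
and the `i`-th site of `H = (F^n)^{⊗N}`, identity elsewhere. -/
def Rsite [Field F] (n N : ℕ) (β u τ : F) (i : Fin N) :
    Matrix (Fin n × (Fin N → Fin n)) (Fin n × (Fin N → Fin n)) F := Matrix.of fun p q =>
  Rmat n β u τ (p.1, p.2 i) (q.1, q.2 i) *
    (if ∀ j, j ≠ i → p.2 j = q.2 j then 1 else 0)

/-- The monodromy matrix `T_a(u) = R_{aN}(u,t_N) ⋯ R_{a1}(u,t_1)` on `V_a ⊗ H`. -/
def Tmono [Field F] (n N : ℕ) (β u : F) (t : Fin N → F) :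
    Matrix (Fin n × (Fin N → Fin n)) (Fin n × (Fin N → Fin n)) F :=
  ((List.ofFn fun i : Fin N => Rsite n N β u (t i) i).reverse).prod

/-- The block `T_a(u)_{r c}` (with respect to the auxiliary space) as an operator on `H`. -/
def blockOp [Field F] (n N : ℕ) (β u : F) (t : Fin N → F) (r c : Fin n) :
    Matrix (Fin N → Fin n) (Fin N → Fin n) F :=
  Matrix.of fun s s' => Tmono n N β u t (r, s) (c, s')

/-- The natural basis vector `|n_1,…,n_N⟩` of `H` (also used as a dual basis covector). -/
def ket [Field F] (n N : ℕ) (g : Fin N → Fin n) : (Fin N → Fin n) → F :=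
  fun s => if s = g then 1 else 0

/-- The nested Bethe ansatz states.  `psi β k σ j m` is the Bethe state of the
level-`m` system, a `GL(j+2)` model on `k m` sites with equivariant parameters
`σ m` and spectral parameters `σ (m+1)`.  The base case (`j = 0`) is the `GL(2)`
state `B_1(σ^{(m+1)}_1) ⋯ B_1(σ^{(m+1)}_{k(m+1)}) |Ω⟩`, and the recursion step is
`|ψ^{(m)}⟩ = ∑_i ⟨i|ψ^{(m+1)}⟩ · B_{i_1}(σ^{(m+1)}_1) ⋯ B_{i_{k(m+1)}}(σ^{(m+1)}_{k(m+1)}) |Ω⟩`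
(the basis label `i_s ∈ {0,…,j}` of the level-`(m+1)` space corresponding to the
operator `B_{i_s+1}` of the level-`m` system). -/
def psi [Field F] (β : F) (k : ℕ → ℕ) (σ : (l : ℕ) → Fin (k l) → F) :
    (j m : ℕ) → (Fin (k m) → Fin (j + 2)) → F
  | 0, m =>
      Matrix.mulVec
        ((List.ofFn fun a : Fin (k (m + 1)) =>
            blockOp 2 (k m) β (σ (m + 1) a) (σ m) 0 1).prod)
        (ket 2 (k m) fun _ => 0)
  | j + 1, m => fun s =>
      ∑ i : Fin (k (m + 1)) → Fin (j + 2),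
        psi β k σ j (m + 1) i *
          Matrix.mulVec
            ((List.ofFn fun a : Fin (k (m + 1)) =>
                blockOp (j + 3) (k m) β (σ (m + 1) a) (σ m) 0 ((i a).succ)).prod)
            (ket (j + 3) (k m) fun _ => 0) s

/-- The transfer matrix `t^{(n)}(u) = Tr_{V_a}(diag(b_0,…,b_{n-1}) T_a(u))`. -/
def transferM [Field F] (n N : ℕ) (β u : F) (t : Fin N → F) (b : Fin n → F) :
    Matrix (Fin N → Fin n) (Fin N → Fin n) F :=
  Matrix.of fun s s' => ∑ a : Fin n, b a * Tmono n N β u t (a, s) (a, s')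

/-! ### Coefficients of the R-matrix -/

/-- Permutation coefficient of the R-matrix. -/
def pc [Field F] {n : ℕ} (β z : F) (k l : Fin n) : F := if k < l then 1 + β * z else 1

/-- Diagonal coefficient of the R-matrix. -/
def qc [Field F] {n : ℕ} (z : F) (k l : Fin n) : F := if l < k then z else 0

theorem Rmat_eq [Field F] (n : ℕ) (β x y : F) (i j k l : Fin n) :
    Rmat n β x y (i, j) (k, l) =
      (if i = l ∧ j = k then pc β (om β x y) k l else 0) +
      (if i = k ∧ j = l then qc (om β x y) k l else 0) := by
  unfold Rmat pc qc
  simp only [Matrix.of_apply]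
  congr 1
  by_cases h1 : i = k <;> by_cases h2 : j = l <;> simp [h1, h2]

theorem om_add [Field F] (β x y w : F) (hy : 1 + β * y ≠ 0) (hw : 1 + β * w ≠ 0) :
    om β x w = om β x y + om β y w + β * om β x y * om β y w := by
  unfold om
  rw [← sub_eq_zero]
  have h : ((x - w) / (1 + β * w) - ((x - y) / (1 + β * y) + (y - w) / (1 + β * w) +
      β * ((x - y) / (1 + β * y)) * ((y - w) / (1 + β * w)))) * ((1 + β * w) * (1 + β * y)) = 0 := by
    rw [div_eq_mul_inv, div_eq_mul_inv, div_eq_mul_inv]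
    linear_combination (x * (1 + β * y) - w * (1 + β * y) - (y - w) * (1 + β * y) - β * (x - y) * (1 + β * y) * (1 + β * y)⁻¹ * (y - w)) * mul_inv_cancel₀ hw - ((x - y) * (1 + β * w) + β * (x - y) * (y - w)) * mul_inv_cancel₀ hy
  rcases mul_eq_zero.mp h with h | h
  · exact h
  · exact absurd h (mul_ne_zero hw hy)

/-- The Lax matrix: `L_{cj}` is an operator on the site. -/
def Lax [Field F] (n : ℕ) (β u τ : F) (c j : Fin n) : Matrix (Fin n) (Fin n) F :=
  Matrix.of fun s s' => Rmat n β u τ (c, s) (j, s')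

theorem Lax_mul [Field F] (n : ℕ) (β u τ : F) (c j : Fin n) (M : Matrix (Fin n) (Fin n) F)
    (s s' : Fin n) :
    (Lax n β u τ c j * M) s s' =
      (if s = j then pc β (om β u τ) j c * M c s' else 0) +
      (if c = j then qc (om β u τ) j s * M s s' else 0) := by
  simp only [Matrix.mul_apply, Lax, Matrix.of_apply, Rmat_eq, add_mul, Finset.sum_add_distrib]
  congr 1
  · by_cases h : s = j <;> simp [h]
  · by_cases h : c = j <;> simp [h]

theorem Lax_apply [Field F] (n : ℕ) (β u τ : F) (c j : Fin n) (s s' : Fin n) :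
    Lax n β u τ c j s s' =
      (if c = s' ∧ s = j then pc β (om β u τ) j s' else 0) +
      (if c = j ∧ s = s' then qc (om β u τ) j s' else 0) := by
  simp only [Lax, Matrix.of_apply, Rmat_eq]

set_option maxHeartbeats 4000000 in
theorem RLL [Field F] (n : ℕ) (β x y w : F) (hy : 1 + β * y ≠ 0) (hw : 1 + β * w ≠ 0)
    (i j k l : Fin n) :
    pc β (om β x y) j i • (Lax n β x w j k * Lax n β y w i l) +
      qc (om β x y) i j • (Lax n β x w i k * Lax n β y w j l) =
    pc β (om β x y) k l • (Lax n β y w j k * Lax n β x w i l) +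
      qc (om β x y) k l • (Lax n β y w j l * Lax n β x w i k) := by
  have h := om_add β x y w hy hw
  ext s s'
  simp only [Matrix.add_apply, Matrix.smul_apply, Lax_mul, Lax_apply, smul_eq_mul]
  rw [h]
  generalize om β x y = z
  generalize om β y w = Y
  clear h
  by_cases a1 : s = k <;> by_cases a2 : j = k <;> by_cases a3 : i = k <;>
  by_cases a4 : s = l <;> by_cases a5 : j = l <;> by_cases a6 : i = l <;>
  by_cases a7 : s = s' <;> by_cases a8 : j = s' <;> by_cases a9 : i = s' <;>
  (try simp only [a1, a2, a3, a4, a5, a6, a7, a8, a9, if_true, if_false, and_true, true_and, and_false, false_and,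
    mul_zero, add_zero, zero_add]) <;>
  (try (exfalso; omega)) <;>
  (try simp only [pc, qc]) <;> grind

/-! ### The monodromy matrix: recursion and RTT relation -/

theorem Rsite_succ [Field F] (n N : ℕ) (β u τ : F) (i : Fin N) (r c s s' : Fin n)
    (ss ss' : Fin N → Fin n) :
    Rsite n (N + 1) β u τ i.succ (r, Fin.cons s ss) (c, Fin.cons s' ss') =
      (if s = s' then Rsite n N β u τ i (r, ss) (c, ss') else 0) := by
  simp only [Rsite, Matrix.of_apply, Fin.cons_succ]
  by_cases h : s = s'
  · subst h
    simp only [if_true]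
    congr 1
    have : (∀ j : Fin (N + 1), j ≠ i.succ → (Fin.cons s ss : Fin (N + 1) → Fin n) j =
        (Fin.cons s ss' : Fin (N + 1) → Fin n) j) ↔ (∀ j, j ≠ i → ss j = ss' j) := by
      rw [Fin.forall_fin_succ]
      simp
    simp only [this]
  · rw [if_neg h, if_neg, mul_zero]
    intro h'
    exact h (by simpa using h' 0 (Fin.succ_ne_zero i).symm)

theorem Rsite_zero [Field F] (n N : ℕ) (β u τ : F) (r c s s' : Fin n)
    (ss ss' : Fin N → Fin n) :
    Rsite n (N + 1) β u τ 0 (r, Fin.cons s ss) (c, Fin.cons s' ss') =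
      Rmat n β u τ (r, s) (c, s') * (if ss = ss' then 1 else 0) := by
  simp only [Rsite, Matrix.of_apply, Fin.cons_zero]
  have : (∀ j : Fin (N + 1), j ≠ 0 → (Fin.cons s ss : Fin (N + 1) → Fin n) j =
        (Fin.cons s' ss' : Fin (N + 1) → Fin n) j) ↔ ss = ss' := by
      rw [Fin.forall_fin_succ]
      simp [funext_iff]
  exact congrArg _ (if_congr this rfl rfl)

theorem sum_cons [Field F] {n N : ℕ} (f : (Fin (N + 1) → Fin n) → F) :
    ∑ x, f x = ∑ s, ∑ ss : Fin N → Fin n, f (Fin.cons s ss) := by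
  rw [← Fintype.sum_prod_type']
  exact (Equiv.sum_comp (Fin.consEquiv fun _ : Fin (N + 1) => Fin n) f).symm

theorem list_succ [Field F] (n N : ℕ) (β u : F) (l : List (F × Fin N)) (r c s s' : Fin n)
    (ss ss' : Fin N → Fin n) :
    (l.map fun x => Rsite n (N + 1) β u x.1 x.2.succ).prod (r, Fin.cons s ss) (c, Fin.cons s' ss') =
      (if s = s' then (l.map fun x => Rsite n N β u x.1 x.2).prod (r, ss) (c, ss') else 0) := by
  induction l generalizing r s ss with
  | nil =>
    simp only [List.map_nil, List.prod_nil, Matrix.one_apply, Prod.mk.injEq]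
    by_cases h1 : s = s' <;> by_cases h2 : ss = ss' <;> simp [h1, h2]
  | cons x l ih =>
    simp only [List.map_cons, List.prod_cons, Matrix.mul_apply, Fintype.sum_prod_type, sum_cons,
      Rsite_succ, ih]
    by_cases h : s = s'
    · subst h
      simp
    · rw [if_neg h]
      apply Finset.sum_eq_zero; intro a _
      apply Finset.sum_eq_zero; intro b _
      apply Finset.sum_eq_zero; intro d _
      by_cases h1 : s = b
      · subst h1; simp [h]
      · simp [h1]

theorem Tmono_zero [Field F] (n : ℕ) (β u : F) (t : Fin 0 → F) : Tmono n 0 β u t = 1 := by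
  simp [Tmono]

theorem Tmono_succ [Field F] (n N : ℕ) (β u : F) (t : Fin (N + 1) → F) (r c s s' : Fin n)
    (ss ss' : Fin N → Fin n) :
    Tmono n (N + 1) β u t (r, Fin.cons s ss) (c, Fin.cons s' ss') =
      ∑ d, Tmono n N β u (fun i => t i.succ) (r, ss) (d, ss') *
        Rmat n β u (t 0) (d, s) (c, s') := by
  have h1 : Tmono n (N + 1) β u t =
      ((List.ofFn fun i : Fin N => (t i.succ, i)).reverse.map
        fun x => Rsite n (N + 1) β u x.1 x.2.succ).prod * Rsite n (N + 1) β u (t 0) 0 := by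
    simp only [Tmono, List.ofFn_succ, List.reverse_cons, List.prod_append, List.prod_singleton,
      List.map_reverse, List.map_ofFn]
    rfl
  have h2 : Tmono n N β u (fun i => t i.succ) =
      ((List.ofFn fun i : Fin N => (t i.succ, i)).reverse.map
        fun x => Rsite n N β u x.1 x.2).prod := by
    simp only [Tmono, List.map_reverse, List.map_ofFn]
    rfl
  rw [h1, h2]
  simp only [Matrix.mul_apply, Fintype.sum_prod_type, sum_cons, list_succ, Rsite_zero]
  apply Finset.sum_congr rfl; intro d _
  simp

/-- gluing of an operator on the first site with one on the rest -/
def glue [Field F] {n N : ℕ} (L : Matrix (Fin n) (Fin n) F)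
    (T : Matrix (Fin N → Fin n) (Fin N → Fin n) F) :
    Matrix (Fin (N + 1) → Fin n) (Fin (N + 1) → Fin n) F :=
  Matrix.of fun s s' => L (s 0) (s' 0) * T (Fin.tail s) (Fin.tail s')

theorem glue_mul [Field F] {n N : ℕ} (L L' : Matrix (Fin n) (Fin n) F)
    (T T' : Matrix (Fin N → Fin n) (Fin N → Fin n) F) :
    glue L T * glue L' T' = glue (L * L') (T * T') := by
  ext s s'
  simp only [glue, Matrix.mul_apply, Matrix.of_apply, sum_cons, Fin.cons_zero, Fin.tail_cons,
    Finset.sum_mul_sum]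
  apply Finset.sum_congr rfl; intro d _
  apply Finset.sum_congr rfl; intro e _
  ring

theorem blockOp_succ [Field F] (n N : ℕ) (β u : F) (t : Fin (N + 1) → F) (r c : Fin n) :
    blockOp n (N + 1) β u t r c =
      ∑ d, glue (Lax n β u (t 0) d c) (blockOp n N β u (fun i => t i.succ) r d) := by
  ext s s'
  have := Tmono_succ n N β u t r c (s 0) (s' 0) (Fin.tail s) (Fin.tail s')
  rw [Fin.cons_self_tail, Fin.cons_self_tail] at this
  simp only [blockOp, Matrix.of_apply, this, Matrix.sum_apply, glue, Lax]
  apply Finset.sum_congr rfl; intro d _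
  ring

theorem glue_add_left [Field F] {n N : ℕ} (L L' : Matrix (Fin n) (Fin n) F)
    (T : Matrix (Fin N → Fin n) (Fin N → Fin n) F) :
    glue (L + L') T = glue L T + glue L' T := by
  ext; simp [glue, add_mul]

theorem glue_add_right [Field F] {n N : ℕ} (L : Matrix (Fin n) (Fin n) F)
    (T T' : Matrix (Fin N → Fin n) (Fin N → Fin n) F) :
    glue L (T + T') = glue L T + glue L T' := by
  ext; simp [glue, mul_add]

theorem glue_smul_left [Field F] {n N : ℕ} (a : F) (L : Matrix (Fin n) (Fin n) F)
    (T : Matrix (Fin N → Fin n) (Fin N → Fin n) F) :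
    glue (a • L) T = a • glue L T := by
  ext; simp [glue, mul_assoc]

theorem glue_smul_right [Field F] {n N : ℕ} (a : F) (L : Matrix (Fin n) (Fin n) F)
    (T : Matrix (Fin N → Fin n) (Fin N → Fin n) F) :
    glue L (a • T) = a • glue L T := by
  ext; simp [glue]; ring

theorem RTT [Field F] (n N : ℕ) (β x y : F) (t : Fin N → F) (hy : 1 + β * y ≠ 0)
    (ht : ∀ a, 1 + β * t a ≠ 0) (i j k l : Fin n) :
    pc β (om β x y) j i • (blockOp n N β x t j k * blockOp n N β y t i l) +
      qc (om β x y) i j • (blockOp n N β x t i k * blockOp n N β y t j l) =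
    pc β (om β x y) k l • (blockOp n N β y t j k * blockOp n N β x t i l) +
      qc (om β x y) k l • (blockOp n N β y t j l * blockOp n N β x t i k) := by
  induction N generalizing i j k l with
  | zero =>
    have h : ∀ u (r c : Fin n), blockOp n 0 β u t r c = if r = c then 1 else 0 := by
      intro u r c
      ext s s'
      have : s = s' := Subsingleton.elim _ _
      subst this
      by_cases h : r = c <;> simp [blockOp, Tmono_zero, Matrix.one_apply, h]
    simp only [h]
    by_cases h1 : j = k <;> by_cases h2 : i = l <;> by_cases h3 : i = k <;>
      by_cases h4 : j = l <;> simp [h1, h2, h3, h4] <;> grind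
  | succ N ih =>
    have ih' := ih (fun i => t i.succ) (fun a => ht _)
    have hR := RLL n β x y (t 0) hy (ht 0)
    simp only [blockOp_succ, Finset.sum_mul_sum, glue_mul]
    generalize om β x y = z at *
    set TX := blockOp n N β x (fun i => t i.succ)
    set TY := blockOp n N β y (fun i => t i.succ)
    set X := Lax n β x (t 0)
    set Y := Lax n β y (t 0)
    calc _ = ∑ c, ∑ d, glue (X c k * Y d l) (pc β z j i • (TX j c * TY i d) +
              qc z i j • (TX i c * TY j d)) := by
            simp only [Finset.smul_sum, ← Finset.sum_add_distrib, glue_add_right, glue_smul_right]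
      _ = ∑ c, ∑ d, glue (X c k * Y d l) (pc β z c d • (TY j c * TX i d) +
              qc z c d • (TY j d * TX i c)) := by simp only [ih']
      _ = (∑ c, ∑ d, glue (pc β z c d • (X c k * Y d l)) (TY j c * TX i d)) +
          ∑ c, ∑ d, glue (qc z c d • (X c k * Y d l)) (TY j d * TX i c) := by
            simp only [← Finset.sum_add_distrib, glue_add_right, glue_smul_right, glue_smul_left]
      _ = (∑ d, ∑ c, glue (pc β z c d • (X c k * Y d l)) (TY j c * TX i d)) +
          ∑ c, ∑ d, glue (qc z c d • (X c k * Y d l)) (TY j d * TX i c) := by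
            rw [Finset.sum_comm]
      _ = ∑ c, ∑ d, glue (pc β z d c • (X d k * Y c l) + qc z c d • (X c k * Y d l))
            (TY j d * TX i c) := by
            simp only [← Finset.sum_add_distrib, glue_add_left]
      _ = ∑ c, ∑ d, glue (pc β z k l • (Y d k * X c l) + qc z k l • (Y d l * X c k))
            (TY j d * TX i c) := by simp only [hR]
      _ = _ := by
            rw [Finset.sum_comm]
            simp only [Finset.smul_sum, ← Finset.sum_add_distrib, glue_add_left, glue_smul_left]

theorem blockOp_mulVec [Field F] (n N : ℕ) (β u : F) (t : Fin (N + 1) → F) (r c : Fin n)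
    (ψ : (Fin (N + 1) → Fin n) → F) (s : Fin n) :
    (fun ss => (blockOp n (N + 1) β u t r c).mulVec ψ (Fin.cons s ss)) =
      (if s = c then ∑ d, pc β (om β u (t 0)) c d •
        (blockOp n N β u (fun i => t i.succ) r d).mulVec (fun ss => ψ (Fin.cons d ss)) else 0) +
      qc (om β u (t 0)) c s •
        (blockOp n N β u (fun i => t i.succ) r c).mulVec (fun ss => ψ (Fin.cons s ss)) := by
  ext ss
  simp only [blockOp_succ, Matrix.mulVec, dotProduct, sum_cons, Matrix.sum_apply, glue,
    Matrix.of_apply, Fin.cons_zero, Fin.tail_cons, Lax_apply, Pi.add_apply, Pi.smul_apply,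
    smul_eq_mul]
  have key : ∀ s' ss', (∑ d, ((if d = s' ∧ s = c then pc β (om β u (t 0)) c s' else 0) +
      if d = c ∧ s = s' then qc (om β u (t 0)) c s' else 0) *
      blockOp n N β u (fun i => t i.succ) r d ss ss') =
      (if s = c then pc β (om β u (t 0)) c s' * blockOp n N β u (fun i => t i.succ) r s' ss ss' else 0)
      + if s = s' then qc (om β u (t 0)) c s' * blockOp n N β u (fun i => t i.succ) r c ss ss' else 0 := by
    intro s' ss'
    simp only [add_mul, Finset.sum_add_distrib]
    congr 1
    · by_cases h : s = c <;> simp [h]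
    · by_cases h : s = s' <;> simp [h]
  simp only [key]
  simp only [add_mul, Finset.sum_add_distrib]
  congr 1
  · by_cases h : s = c
    · simp only [h, if_true, Finset.sum_apply, Pi.smul_apply, smul_eq_mul, Finset.mul_sum,
        mul_assoc, Matrix.mulVec, dotProduct]
    · simp [h]
  · rw [Finset.sum_comm]
    simp [Finset.mul_sum, mul_assoc]

/-! ### The algebraic Bethe ansatz -/

theorem om_ne [Field F] {β x y : F} (hy : 1 + β * y ≠ 0) (h : x ≠ y) : om β x y ≠ 0 :=
  div_ne_zero (sub_ne_zero.mpr h) hy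

theorem inv_om [Field F] (β x y : F) : (om β x y)⁻¹ = (1 + β * y) * (x - y)⁻¹ := by
  rw [om, inv_div, div_eq_mul_inv]

theorem coefA1 [Field F] {β u x a : F} (hu : 1 + β * u ≠ 0) (hx : 1 + β * x ≠ 0)
    (ha : 1 + β * a ≠ 0) (hux : u ≠ x) (hua : u ≠ a) (hxa : x ≠ a) :
    (om β x u)⁻¹ * (om β a x)⁻¹ - (om β x u)⁻¹ * (om β a u)⁻¹ =
      - ((om β a u)⁻¹ * (om β x a)⁻¹) := by
  have h1 : x - u ≠ 0 := sub_ne_zero.mpr hux.symm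
  have h2 : a - u ≠ 0 := sub_ne_zero.mpr hua.symm
  have h3 : a - x ≠ 0 := sub_ne_zero.mpr hxa.symm
  have h4 : (x - a)⁻¹ = - (a - x)⁻¹ := by rw [← neg_sub, neg_inv]
  simp only [inv_om]
  rw [h4]
  field_simp
  ring

theorem coefA2 [Field F] {β u x a : F} (hu : 1 + β * u ≠ 0)
    (ha : 1 + β * a ≠ 0) (hux : u ≠ x) (hxa : x ≠ a) :
    (om β x u)⁻¹ * (om β a u)⁻¹ * om β x u =
      ((om β a u)⁻¹ * (om β x a)⁻¹) * om β x a := by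
  have h1 := om_ne hu hux.symm
  have h2 := om_ne ha hxa
  rw [mul_right_comm, inv_mul_cancel₀ h1, mul_assoc, inv_mul_cancel₀ h2, one_mul, mul_one]

theorem coefAp [Field F] {n : ℕ} {β u x a : F} (hu : 1 + β * u ≠ 0) (hx : 1 + β * x ≠ 0)
    (ha : 1 + β * a ≠ 0) (hux : u ≠ x) (hua : u ≠ a) (hxa : x ≠ a) (s i : Fin n) :
    (om β x u)⁻¹ * (om β a x)⁻¹ - (om β x u)⁻¹ * (om β a u)⁻¹ * pc β (om β x u) s i =
      - ((om β a u)⁻¹ * (om β x a)⁻¹) * pc β (om β x a) s i := by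
  have h1 := coefA1 hu hx ha hux hua hxa
  have h2 := coefA2 (x := x) hu ha hux hxa
  unfold pc
  split_ifs
  · linear_combination h1 - β * h2
  · linear_combination h1

theorem coefAq [Field F] {n : ℕ} {β u x a : F} (hu : 1 + β * u ≠ 0)
    (ha : 1 + β * a ≠ 0) (hux : u ≠ x) (hxa : x ≠ a) (s i : Fin n) :
    (om β x u)⁻¹ * (om β a u)⁻¹ * qc (om β x u) s i =
      ((om β a u)⁻¹ * (om β x a)⁻¹) * qc (om β x a) s i := by
  have h2 := coefA2 (x := x) hu ha hux hxa
  unfold qc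
  split_ifs
  · exact h2
  · simp

theorem gD_eq [Field F] {β u a : F} (ha : 1 + β * a ≠ 0) :
    (1 + β * om β u a) * (om β u a)⁻¹ = (1 + β * u) * (u - a)⁻¹ := by
  rw [inv_om, om]
  have : (1 + β * ((u - a) / (1 + β * a))) * (1 + β * a) = 1 + β * u := by
    rw [add_mul, mul_assoc, div_mul_cancel₀ _ ha]; ring
  rw [← mul_assoc, this]

theorem coefD [Field F] {β u x a : F} (hx : 1 + β * x ≠ 0)
    (ha : 1 + β * a ≠ 0) (hux : u ≠ x) (hua : u ≠ a) (hxa : x ≠ a) :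
    ((1 + β * om β u x) * (om β u x)⁻¹) * ((1 + β * om β x a) * (om β x a)⁻¹) -
      (om β u x)⁻¹ * ((1 + β * om β u a) * (om β u a)⁻¹) =
      - (((1 + β * om β u a) * (om β u a)⁻¹) * (om β a x)⁻¹) := by
  have h1 : u - x ≠ 0 := sub_ne_zero.mpr hux
  have h2 : u - a ≠ 0 := sub_ne_zero.mpr hua
  have h3 : x - a ≠ 0 := sub_ne_zero.mpr hxa
  have h4 : (a - x)⁻¹ = - (x - a)⁻¹ := by rw [← neg_sub, neg_inv]
  rw [gD_eq ha, gD_eq hx, gD_eq ha, inv_om, inv_om, h4]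
  field_simp
  ring

theorem om_swap [Field F] (β x y : F) (hx : 1 + β * x ≠ 0) (hy : 1 + β * y ≠ 0) :
    om β x y + om β y x + β * om β x y * om β y x = 0 := by
  rw [← om_add β x y x hy hx]
  simp [om]

/-- restriction of a tensor to a given value of the first index -/
def sl (F : Type*) [Field F] {k m : ℕ} (s : Fin m) :
    ((Fin (k + 1) → Fin m) → F) →ₗ[F] ((Fin k → Fin m) → F) :=
  LinearMap.funLeft F F (fun ss => (Fin.cons s ss : Fin (k + 1) → Fin m))

/-- The Bethe vector map. -/
def Phi [Field F] {H : Type*} [AddCommGroup H] [Module F H] {m : ℕ}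
    (B : F → Fin m → H →ₗ[F] H) (Ω : H) :
    (k : ℕ) → (Fin k → F) → ((Fin k → Fin m) → F) →ₗ[F] H
  | 0, _ => (LinearMap.proj (fun i : Fin 0 => i.elim0)).smulRight Ω
  | k + 1, σ => ∑ s, (B (σ 0) s) ∘ₗ (Phi B Ω k fun i => σ i.succ) ∘ₗ sl F s

/-- The nested monodromy operators. -/
def Tn [Field F] {m : ℕ} (β : F) (k : ℕ) (σ : Fin k → F) (u : F) (i j : Fin m) :
    ((Fin k → Fin m) → F) →ₗ[F] ((Fin k → Fin m) → F) := (blockOp m k β u σ i j).mulVecLin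

theorem Phi_succ [Field F] {H : Type*} [AddCommGroup H] [Module F H] {m : ℕ}
    (B : F → Fin m → H →ₗ[F] H) (Ω : H) (k : ℕ) (x : F) (σ : Fin k → F) (ψ) :
    Phi B Ω (k + 1) (Fin.cons x σ) ψ = ∑ s, B x s (Phi B Ω k σ (sl F s ψ)) := by
  simp [Phi]

theorem sl_Tn [Field F] {m : ℕ} (β : F) (k : ℕ) (x : F) (σ : Fin k → F) (u : F) (i c s : Fin m)
    (ψ : (Fin (k + 1) → Fin m) → F) :
    sl F s (Tn β (k + 1) (Fin.cons x σ) u i c ψ) =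
      (if s = c then ∑ d, pc β (om β u x) c d • Tn β k σ u i d (sl F d ψ) else 0) +
      qc (om β u x) c s • Tn β k σ u i c (sl F s ψ) :=
  blockOp_mulVec m k β u (Fin.cons x σ) i c ψ s

theorem Tn_zero [Field F] {m : ℕ} (β : F) (σ : Fin 0 → F) (u : F) (i j : Fin m)
    (ψ : (Fin 0 → Fin m) → F) : Tn β 0 σ u i j ψ = if i = j then ψ else 0 := by
  ext s
  simp only [Tn, Matrix.mulVecLin_apply, Matrix.mulVec, dotProduct, blockOp, Tmono_zero,
    Matrix.of_apply, Matrix.one_apply]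
  by_cases h : i = j
  · rw [Fintype.sum_eq_single s]
    · simp [h]
    · intro s' hs; exact absurd (Subsingleton.elim _ _) hs
  · simp [h]

theorem core [Field F] {H : Type*} [AddCommGroup H] [Module F H] {m : ℕ} (β : F)
    (A : F → H →ₗ[F] H) (B : F → Fin m → H →ₗ[F] H) (D : F → Fin m → Fin m → H →ₗ[F] H)
    (Ω : H) (δ : F → F)
    (hAB : ∀ u v s w, 1 + β * u ≠ 0 → 1 + β * v ≠ 0 → u ≠ v →
      A u (B v s w) = (om β v u)⁻¹ • (B v s (A u w) - B u s (A v w)))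
    (hDB : ∀ u v i j s w, 1 + β * u ≠ 0 → 1 + β * v ≠ 0 → u ≠ v →
      D u i j (B v s w) = (om β u v)⁻¹ • (pc β (om β u v) j s • B v j (D u i s w) +
        qc (om β u v) j s • B v s (D u i j w)) -
        ((1 + β * om β u v) * (om β u v)⁻¹) • B u j (D v i s w))
    (hBB : ∀ u v j s w, 1 + β * u ≠ 0 → 1 + β * v ≠ 0 →
      B u j (B v s w) = pc β (om β u v) j s • B v j (B u s w) +
        qc (om β u v) j s • B v s (B u j w))
    (hA : ∀ u, A u Ω = Ω) (hD : ∀ u i j, D u i j Ω = if i = j then δ u • Ω else 0)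
    (k : ℕ) (σ : Fin k → F) (hg : ∀ a, 1 + β * σ a ≠ 0) (hinj : ∀ a c, a ≠ c → σ a ≠ σ c) :
    ∃ W Z : Fin k → Fin m → (((Fin k → Fin m) → F) →ₗ[F] H),
      (∀ u, 1 + β * u ≠ 0 → (∀ a, u ≠ σ a) → ∀ ψ,
        A u (Phi B Ω k σ ψ) = (∏ a, (om β (σ a) u)⁻¹) • Phi B Ω k σ ψ -
          ∑ α, ((om β (σ α) u)⁻¹ * ∏ a, if a = α then 1 else (om β (σ a) (σ α))⁻¹) •
            ∑ i, B u i (W α i ψ)) ∧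
      (∀ u, 1 + β * u ≠ 0 → (∀ a, u ≠ σ a) → ∀ i j ψ,
        D u i j (Phi B Ω k σ ψ) = (δ u * ∏ a, (om β u (σ a))⁻¹) • Phi B Ω k σ (Tn β k σ u i j ψ) -
          ∑ α, (((1 + β * om β u (σ α)) * (om β u (σ α))⁻¹) * (δ (σ α) *
              ∏ a, if a = α then 1 else (om β (σ α) (σ a))⁻¹)) • B u j (Z α i ψ)) ∧
      (∀ α i c j ψ, W α j (Tn β k σ (σ α) i c ψ) = if j = c then Z α i ψ else 0) := by
  induction k with
  | zero =>
    refine ⟨fun α => α.elim0, fun α => α.elim0, ?_, ?_, fun α => α.elim0⟩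
    · intro u _ _ ψ
      simp [Phi, hA]
    · intro u _ _ i j ψ
      simp only [Tn_zero]
      by_cases h : i = j
      · simp [Phi, hD, h, smul_smul, mul_comm]
      · simp [Phi, hD, h]
  | succ k ih =>
    obtain ⟨x, σ', rfl⟩ : ∃ x σ', σ = Fin.cons x σ' :=
      ⟨σ 0, Fin.tail σ, (Fin.cons_self_tail σ).symm⟩
    have hx : 1 + β * x ≠ 0 := hg 0
    have hg' : ∀ a, 1 + β * σ' a ≠ 0 := fun a => by simpa using hg a.succ
    have hxσ : ∀ a, x ≠ σ' a := fun a => by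
      simpa using hinj 0 a.succ (Fin.succ_ne_zero a).symm
    obtain ⟨W, Z, h1, h2, h3⟩ := ih σ' hg'
      (fun a c h => by simpa using hinj a.succ c.succ (by simpa using h))
    refine ⟨Fin.cons (fun i => Phi B Ω k σ' ∘ₗ sl F i) (fun α s =>
        ∑ i, (pc β (om β x (σ' α)) s i • (B x i ∘ₗ W α i ∘ₗ sl F s) +
          qc (om β x (σ' α)) i s • (B x i ∘ₗ W α s ∘ₗ sl F i))),
      Fin.cons (fun i => ∑ s, Phi B Ω k σ' ∘ₗ Tn β k σ' x i s ∘ₗ sl F s)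
        (fun α i => ∑ s, B x s ∘ₗ Z α i ∘ₗ sl F s), ?_, ?_, ?_⟩
    · intro u hu huσ ψ
      have hux : u ≠ x := huσ 0
      have huσ' : ∀ a, u ≠ σ' a := fun a => by simpa using huσ a.succ
      have e1 := h1 u hu huσ'
      have e2 := h1 x hx hxσ
      rw [Phi_succ, map_sum]
      simp only [Fin.sum_univ_succ, Fin.prod_univ_succ, Fin.cons_zero, Fin.cons_succ,
        Fin.succ_ne_zero, if_true, if_false, one_mul, (Fin.succ_ne_zero _).symm, Fin.succ_inj]
      have s1 : ∀ s, A u (B x s (Phi B Ω k σ' (sl F s ψ))) =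
          ((om β x u)⁻¹ * ∏ a, (om β (σ' a) u)⁻¹) • B x s (Phi B Ω k σ' (sl F s ψ)) -
          ((om β x u)⁻¹ * ∏ a, (om β (σ' a) x)⁻¹) • B u s (Phi B Ω k σ' (sl F s ψ)) -
          ∑ α, ∑ i, ((om β (σ' α) u)⁻¹ * ((om β x (σ' α))⁻¹ *
            ∏ a, if a = α then 1 else (om β (σ' a) (σ' α))⁻¹)) •
            (pc β (om β x (σ' α)) s i • B u s (B x i (W α i (sl F s ψ))) +
            qc (om β x (σ' α)) s i • B u i (B x s (W α i (sl F s ψ)))) := by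
        intro s
        have key : ∀ α i, (om β x u)⁻¹ • (((om β (σ' α) u)⁻¹ *
              ∏ a, if a = α then 1 else (om β (σ' a) (σ' α))⁻¹) • B x s (B u i (W α i (sl F s ψ))) -
            ((om β (σ' α) x)⁻¹ *
              ∏ a, if a = α then 1 else (om β (σ' a) (σ' α))⁻¹) • B u s (B x i (W α i (sl F s ψ)))) =
            ((om β (σ' α) u)⁻¹ * ((om β x (σ' α))⁻¹ *
            ∏ a, if a = α then 1 else (om β (σ' a) (σ' α))⁻¹)) •
            (pc β (om β x (σ' α)) s i • B u s (B x i (W α i (sl F s ψ))) +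
            qc (om β x (σ' α)) s i • B u i (B x s (W α i (sl F s ψ)))) := by
          intro α i
          have c1 := coefAp hu hx (hg' α) hux (huσ' α) (hxσ α) s i
          have c2 := coefAq hu (hg' α) hux (hxσ α) s i
          rw [hBB x u s i _ hx hu]
          generalize (∏ a, if a = α then 1 else (om β (σ' a) (σ' α))⁻¹) = P
          linear_combination (norm := module) (-P * c1) • B u s (B x i (W α i (sl F s ψ))) +
            (P * c2) • B u i (B x s (W α i (sl F s ψ)))
        rw [hAB u x s _ hu hx hux, e1, e2]
        simp only [← key, map_sub, map_smul, map_sum, Finset.smul_sum, smul_sub,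
          Finset.sum_sub_distrib, smul_smul]
        abel
      simp only [s1, Finset.sum_sub_distrib, ← Finset.smul_sum]
      rw [sub_sub]
      congr 2
      rw [Finset.sum_comm]
      apply Finset.sum_congr rfl; intro α _
      simp only [← Finset.smul_sum]
      congr 1
      simp only [LinearMap.sum_apply, LinearMap.add_apply, LinearMap.smul_apply,
        LinearMap.comp_apply, map_sum, map_add, map_smul, Finset.sum_add_distrib]
      congr 1
      exact Finset.sum_comm
    · intro u hu huσ i j ψ
      have hux : u ≠ x := huσ 0
      have huσ' : ∀ a, u ≠ σ' a := fun a => by simpa using huσ a.succ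
      have e1 := h2 u hu huσ'
      have e2 := h2 x hx hxσ
      rw [Phi_succ, map_sum]
      simp only [Fin.sum_univ_succ, Fin.prod_univ_succ, Fin.cons_zero, Fin.cons_succ,
        Fin.succ_ne_zero, if_true, if_false, one_mul, (Fin.succ_ne_zero _).symm, Fin.succ_inj]
      have s1 : ∀ s, D u i j (B x s (Phi B Ω k σ' (sl F s ψ))) =
          (δ u * ((om β u x)⁻¹ * ∏ a, (om β u (σ' a))⁻¹)) •
            (pc β (om β u x) j s • B x j (Phi B Ω k σ' (Tn β k σ' u i s (sl F s ψ))) +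
             qc (om β u x) j s • B x s (Phi B Ω k σ' (Tn β k σ' u i j (sl F s ψ)))) -
          (((1 + β * om β u x) * (om β u x)⁻¹) * (δ x * ∏ a, (om β x (σ' a))⁻¹)) •
            B u j (Phi B Ω k σ' (Tn β k σ' x i s (sl F s ψ))) -
          ∑ α, (((1 + β * om β u (σ' α)) * (om β u (σ' α))⁻¹) * (δ (σ' α) * ((om β (σ' α) x)⁻¹ *
            ∏ a, if a = α then 1 else (om β (σ' α) (σ' a))⁻¹))) •
            B u j (B x s (Z α i (sl F s ψ))) := by
        intro s
        have key : ∀ α, (om β u x)⁻¹ • (pc β (om β u x) j s •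
            (((1 + β * om β u (σ' α)) * (om β u (σ' α))⁻¹) * (δ (σ' α) *
              ∏ a, if a = α then 1 else (om β (σ' α) (σ' a))⁻¹)) •
                B x j (B u s (Z α i (sl F s ψ))) +
            qc (om β u x) j s •
            (((1 + β * om β u (σ' α)) * (om β u (σ' α))⁻¹) * (δ (σ' α) *
              ∏ a, if a = α then 1 else (om β (σ' α) (σ' a))⁻¹)) •
                B x s (B u j (Z α i (sl F s ψ)))) -
            ((1 + β * om β u x) * (om β u x)⁻¹) •
            (((1 + β * om β x (σ' α)) * (om β x (σ' α))⁻¹) * (δ (σ' α) *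
              ∏ a, if a = α then 1 else (om β (σ' α) (σ' a))⁻¹)) •
                B u j (B x s (Z α i (sl F s ψ))) =
            (((1 + β * om β u (σ' α)) * (om β u (σ' α))⁻¹) * (δ (σ' α) * ((om β (σ' α) x)⁻¹ *
              ∏ a, if a = α then 1 else (om β (σ' α) (σ' a))⁻¹))) •
            B u j (B x s (Z α i (sl F s ψ))) := by
          intro α
          have c1 := coefD hx (hg' α) hux (huσ' α) (hxσ α)
          have c2 := hBB u x j s (Z α i (sl F s ψ)) hu hx
          generalize (∏ a, if a = α then 1 else (om β (σ' α) (σ' a))⁻¹) = P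
          generalize (1 + β * om β u (σ' α)) * (om β u (σ' α))⁻¹ = g1 at *
          generalize (1 + β * om β x (σ' α)) * (om β x (σ' α))⁻¹ = g2 at *
          generalize (1 + β * om β u x) * (om β u x)⁻¹ = g3 at *
          generalize (om β u x)⁻¹ = f3 at *
          linear_combination (norm := module) (-(δ (σ' α) * P) * c1) • B u j (B x s (Z α i (sl F s ψ))) -
            (f3 * g1 * δ (σ' α) * P) • c2
        rw [hDB u x i j s _ hu hx hux, e1, e1, e2]
        simp only [← key, map_sub, map_smul, map_sum, Finset.smul_sum, smul_sub, smul_add,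
          Finset.sum_sub_distrib, Finset.sum_add_distrib, smul_smul]
        have r1 : ∀ p : F, (om β u x)⁻¹ * (p * (δ u * ∏ a, (om β u (σ' a))⁻¹)) =
            δ u * ((om β u x)⁻¹ * ∏ a, (om β u (σ' a))⁻¹) * p := by intro p; ring
        simp only [r1]
        abel
      have s2 : ∑ s, (pc β (om β u x) j s • B x j (Phi B Ω k σ' (Tn β k σ' u i s (sl F s ψ))) +
             qc (om β u x) j s • B x s (Phi B Ω k σ' (Tn β k σ' u i j (sl F s ψ)))) =
          Phi B Ω (k + 1) (Fin.cons x σ') (Tn β (k + 1) (Fin.cons x σ') u i j ψ) := by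
        rw [Phi_succ]
        simp only [sl_Tn, map_add, map_smul, Finset.sum_add_distrib]
        congr 1
        symm
        rw [Finset.sum_eq_single j]
        · simp [map_sum]
        · intro b _ hb; simp [hb]
        · simp
      simp only [s1, Finset.sum_sub_distrib, ← Finset.smul_sum]
      rw [s2, sub_sub]
      congr 2
      · congr 1
        simp [map_sum]
      rw [Finset.sum_comm]
      apply Finset.sum_congr rfl; intro α _
      simp only [← Finset.smul_sum]
      congr 1
      simp [map_sum]
    · intro α
      refine Fin.cases ?_ (fun α => ?_) α
      · intro i c j ψ
        simp only [Fin.cons_zero, LinearMap.comp_apply, sl_Tn]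
        have h0 : om β x x = 0 := by simp [om]
        have hp : ∀ a b : Fin m, pc β (0 : F) a b = 1 := by intro a b; simp [pc]
        have hq : ∀ a b : Fin m, qc (0 : F) a b = 0 := by intro a b; simp [qc]
        simp only [h0, hp, hq, one_smul, zero_smul, add_zero]
        by_cases h : j = c <;> simp [h, map_sum]
      · intro i c j ψ
        simp only [Fin.cons_succ, LinearMap.sum_apply, LinearMap.add_apply, LinearMap.smul_apply,
          LinearMap.comp_apply, sl_Tn]
        have ha := hg' α
        have hs := om_swap β x (σ' α) hx ha
        generalize om β x (σ' α) = z1 at *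
        generalize om β (σ' α) x = z2 at *
        have hW : ∀ i' r, W α i' ((if r = c then ∑ d, pc β z2 c d •
          Tn β k σ' (σ' α) i d (sl F d ψ) else 0) + qc z2 c r •
          Tn β k σ' (σ' α) i c (sl F r ψ)) = (if r = c then pc β z2 c i' • Z α i (sl F i' ψ) else 0)
            + (if i' = c then qc z2 c r • Z α i (sl F r ψ) else 0) := by
          intro i' r
          rw [map_add, map_smul, h3]
          congr 1
          · by_cases h : r = c
            · simp [h, map_sum, h3]
            · simp [h]
          · by_cases h : i' = c <;> simp [h]
        simp only [hW]
        simp only [map_add, smul_add, Finset.sum_add_distrib]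
        have t1 : (∑ i', pc β z1 j i' • B x i' (if i' = c then qc z2 c j • Z α i (sl F j ψ) else 0))
            = pc β z1 j c • B x c (qc z2 c j • Z α i (sl F j ψ)) := by
          rw [Finset.sum_eq_single c]
          · simp
          · intro b _ hb; simp [hb]
          · simp
        have t2 : (∑ i', qc z1 i' j • B x i' (if i' = c then pc β z2 c j • Z α i (sl F j ψ) else 0))
            = qc z1 c j • B x c (pc β z2 c j • Z α i (sl F j ψ)) := by
          rw [Finset.sum_eq_single c]
          · simp
          · intro b _ hb; simp [hb]
          · simp
        rw [t1, t2]
        have t3 : pc β z1 j c • B x c (qc z2 c j • Z α i (sl F j ψ)) +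
            qc z1 c j • B x c (pc β z2 c j • Z α i (sl F j ψ)) = 0 := by
          simp only [map_smul, smul_smul, ← add_smul]
          have : pc β z1 j c * qc z2 c j + qc z1 c j * pc β z2 c j = 0 := by
            rcases lt_trichotomy j c with h | h | h
            · simp only [pc, qc, h, if_true, not_lt_of_gt h, if_false]
              linear_combination hs
            · simp [qc, h]
            · simp [qc, not_lt_of_gt h]
          rw [this, zero_smul]
        have t4 : (∑ i', pc β z1 j i' • B x i' (if j = c then pc β z2 c i' • Z α i (sl F i' ψ) else 0))
            + (∑ i', qc z1 i' j • B x i' (if j = c then qc z2 c i' • Z α i (sl F i' ψ) else 0))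
            = if j = c then ∑ s, B x s (Z α i (sl F s ψ)) else 0 := by
          by_cases h : j = c
          · subst h
            simp only [if_true, ← Finset.sum_add_distrib, map_smul, smul_smul, ← add_smul]
            apply Finset.sum_congr rfl; intro s _
            have : pc β z1 j s * pc β z2 j s + qc z1 s j * qc z2 j s = 1 := by
              rcases lt_trichotomy j s with h | h | h
              · simp only [pc, qc, h, if_true, not_lt_of_gt h, if_false]
                linear_combination β * hs
              · simp [pc, qc, h]
              · simp [pc, qc, not_lt_of_gt h]
            rw [this, one_smul]
          · simp [h]
        rw [← t4, ← sub_eq_zero, ← t3]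
        simp only [map_smul]
        abel


/-! ### One level of the nested Bethe ansatz -/

theorem RTT_apply [Field F] (n N : ℕ) (β x y : F) (t : Fin N → F) (hy : 1 + β * y ≠ 0)
    (ht : ∀ a, 1 + β * t a ≠ 0) (i j k l : Fin n) (w : (Fin N → Fin n) → F) :
    pc β (om β x y) j i • Tn β N t x j k (Tn β N t y i l w) +
      qc (om β x y) i j • Tn β N t x i k (Tn β N t y j l w) =
    pc β (om β x y) k l • Tn β N t y j k (Tn β N t x i l w) +
      qc (om β x y) k l • Tn β N t y j l (Tn β N t x i k w) := by
  have h := congrArg (fun M => Matrix.mulVec M w) (RTT n N β x y t hy ht i j k l)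
  simpa only [Tn, Matrix.mulVecLin_apply, Matrix.mulVec_mulVec, Matrix.add_mulVec,
    Matrix.smul_mulVec] using h

theorem sl_ket [Field F] (n N : ℕ) (s : Fin (n + 1)) :
    sl F s (ket (n + 1) (N + 1) (fun _ => 0)) = if s = 0 then ket (n + 1) N (fun _ => 0) else 0 := by
  ext ss
  simp only [sl, LinearMap.funLeft_apply, ket]
  have : (Fin.cons s ss : Fin (N + 1) → Fin (n + 1)) = (fun _ => 0) ↔ s = 0 ∧ ss = fun _ => 0 := by
    constructor
    · intro h
      exact ⟨by simpa using congrFun h 0, funext fun i => by simpa using congrFun h i.succ⟩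
    · rintro ⟨rfl, rfl⟩
      funext i
      refine Fin.cases ?_ (fun i => ?_) i <;> simp
  simp only [this]
  by_cases h : s = 0
  · simp [h, ket]
  · simp [h]

theorem eq_of_sl [Field F] {k m : ℕ} {v w : (Fin (k + 1) → Fin m) → F}
    (h : ∀ s, sl F s v = sl F s w) : v = w := by
  ext s
  have := congrFun (h (s 0)) (Fin.tail s)
  simpa [sl, LinearMap.funLeft_apply] using this

theorem vac [Field F] (n N : ℕ) (β u : F) (t : Fin N → F) (r c : Fin (n + 1)) (h : c = 0 ∨ r ≠ 0) :
    Tn β N t u r c (ket (n + 1) N (fun _ => 0)) =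
      if r = c then (if c = 0 then 1 else ∏ a, om β u (t a)) • ket (n + 1) N (fun _ => 0) else 0 := by
  induction N generalizing r c with
  | zero => rw [Tn_zero]; simp
  | succ N ih =>
    obtain ⟨x, t', rfl⟩ : ∃ x t', t = Fin.cons x t' :=
      ⟨t 0, Fin.tail t, (Fin.cons_self_tail t).symm⟩
    have key : (∑ d, pc β (om β u x) c d • Tn β N t' u r d
        (sl F d (ket (n + 1) (N + 1) (fun _ => 0)))) =
        if r = 0 then ket (n + 1) N (fun _ => 0) else (0 : (Fin N → Fin (n + 1)) → F) := by
      rw [Finset.sum_eq_single 0]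
      · rw [sl_ket, if_pos rfl, ih _ _ _ (Or.inl rfl)]
        simp [pc]
      · intro d _ hd
        rw [sl_ket, if_neg hd]; simp
      · simp
    apply eq_of_sl
    intro s
    rw [sl_Tn, key, sl_ket]
    by_cases hc : c = 0
    · subst hc
      by_cases hs : s = 0
      · subst hs
        by_cases hr : r = 0 <;> simp [hr, qc, sl_ket]
      · by_cases hr : r = 0 <;> simp [hr, hs, qc, sl_ket]
    · have hr : r ≠ 0 := h.resolve_left hc
      have h0 : 0 < c := Fin.pos_of_ne_zero hc
      by_cases hs : s = 0
      · subst hs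
        rw [if_pos rfl, ih t' r c h]
        by_cases hrc : r = c
        · subst hrc
          simp [qc, h0, hr, sl_ket, Fin.prod_univ_succ, smul_smul, Ne.symm hr]
        · simp [hrc, Ne.symm hc]
      · by_cases hrc : r = c <;> simp [hs, hr, hrc, hc, sl_ket]

theorem prod_if_neg [Field F] {k : ℕ} (α : Fin k) (g : Fin k → F) (hg : g α = 1) :
    (∏ a, if a = α then 1 else -(g a)) = (-1) ^ (k - 1) * ∏ a, g a := by
  have h : ∀ a, (if a = α then 1 else -(g a)) = (if a = α then 1 else -1) * g a := by
    intro a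
    by_cases h : a = α
    · simp [h, hg]
    · simp [h]
  simp only [h, Finset.prod_mul_distrib]
  congr 1
  rw [Finset.prod_ite]
  simp [Finset.filter_ne', Finset.card_erase_of_mem]

theorem level [Field F] (m N : ℕ) (β : F) (t : Fin N → F) (ht : ∀ a, 1 + β * t a ≠ 0)
    (b : Fin (m + 1) → F) (k : ℕ) (σ : Fin k → F) (hg : ∀ a, 1 + β * σ a ≠ 0)
    (hinj : ∀ a c, a ≠ c → σ a ≠ σ c) (ψ : (Fin k → Fin m) → F) (lam : F → F)
    (hψ : ∀ u, ∑ i : Fin m, b i.succ • Tn β k σ u i i ψ = lam u • ψ)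
    (hB : ∀ α, (∏ a, (1 + β * om β (σ a) (σ α))) * (∏ i, om β (σ α) (t i)) * lam (σ α) =
      (-1) ^ (k - 1) * b 0)
    (u : F) (hu : 1 + β * u ≠ 0) (huσ : ∀ a, u ≠ σ a) :
    (transferM (m + 1) N β u t b).mulVec (Phi (fun v (s : Fin m) => Tn β N t v 0 s.succ)
        (ket (m + 1) N fun _ => 0) k σ ψ) =
      (b 0 * ∏ a, (om β (σ a) u)⁻¹ + (∏ i, om β u (t i)) * (∏ a, (om β u (σ a))⁻¹) * lam u) •
        Phi (fun v (s : Fin m) => Tn β N t v 0 s.succ) (ket (m + 1) N fun _ => 0) k σ ψ := by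
  obtain ⟨W, Z, h1, h2, h3⟩ := core β (fun v => Tn β N t v 0 0)
    (fun v (s : Fin m) => Tn β N t v 0 s.succ)
    (fun v i j => Tn β N t v i.succ j.succ) (ket (m + 1) N fun _ => 0)
    (fun v => ∏ i, om β v (t i))
    (by
      intro u v s w hu hv huv
      have h := RTT_apply (m + 1) N β v u t hu ht 0 0 s.succ 0 w
      have hn := om_ne hu huv.symm
      simp only [pc, qc, lt_irrefl, if_false, Fin.not_lt_zero, Fin.succ_pos, if_true, one_smul,
        zero_smul, add_zero] at h
      rw [h, add_sub_cancel_left, smul_smul, inv_mul_cancel₀ hn, one_smul])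
    (by
      intro u v i j s w hu hv huv
      have h := RTT_apply (m + 1) N β u v t hv ht i.succ 0 j.succ s.succ w
      have hn := om_ne hv huv
      simp only [pc, qc, lt_irrefl, if_false, Fin.not_lt_zero, Fin.succ_pos, if_true, one_smul,
        zero_smul, add_zero, Fin.succ_lt_succ_iff] at h
      simp only [pc, qc]
      rw [← h, smul_add, smul_smul, smul_smul, inv_mul_cancel₀ hn, one_smul, mul_comm (om β u v)⁻¹]
      abel)
    (by
      intro u v j s w hu hv
      have h := RTT_apply (m + 1) N β u v t hv ht 0 0 j.succ s.succ w
      simp only [pc, qc, lt_irrefl, if_false, one_smul,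
        zero_smul, add_zero, Fin.succ_lt_succ_iff] at h
      simpa only [pc, qc] using h)
    (by intro u; simpa using vac m N β u t 0 0 (Or.inl rfl))
    (by
      intro u i j
      have := vac m N β u t i.succ j.succ (Or.inr (Fin.succ_ne_zero i))
      simpa using this)
    k σ hg hinj
  set Φ := Phi (fun v (s : Fin m) => Tn β N t v 0 s.succ) (ket (m + 1) N fun _ => 0) k σ with hΦ
  have hT : ∀ w, (transferM (m + 1) N β u t b).mulVec w =
      b 0 • Tn β N t u 0 0 w + ∑ i : Fin m, b i.succ • Tn β N t u i.succ i.succ w := by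
    intro w
    have : transferM (m + 1) N β u t b = ∑ a, b a • blockOp (m + 1) N β u t a a := by
      ext s s'
      simp [transferM, blockOp, Matrix.sum_apply]
    rw [this, ← Fin.sum_univ_succ (fun a => b a • Tn β N t u a a w), Matrix.sum_mulVec]
    simp only [Matrix.smul_mulVec]
    rfl
  have hW : ∀ α i, b i.succ • Z α i ψ = lam (σ α) • W α i ψ := by
    intro α i
    rw [← map_smul (W α i), ← hψ (σ α), map_sum]
    simp only [map_smul, h3]
    rw [Finset.sum_eq_single i]
    · simp
    · intro c _ hc
      simp [Ne.symm hc]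
    · simp
  rw [hT, h1 u hu huσ ψ]
  simp only [h2 u hu huσ]
  simp only [smul_sub, Finset.sum_sub_distrib]
  have q1 : ∑ i : Fin m, b i.succ • ((∏ i, om β u (t i)) * ∏ a, (om β u (σ a))⁻¹) •
      Φ (Tn β k σ u i i ψ) =
      ((∏ i, om β u (t i)) * (∏ a, (om β u (σ a))⁻¹) * lam u) • Φ ψ := by
    rw [mul_smul _ (lam u), ← map_smul, ← hψ u, map_sum, Finset.smul_sum]
    apply Finset.sum_congr rfl; intro i _
    rw [map_smul, smul_comm]
  have coef : ∀ α, b 0 * (∏ a, if a = α then 1 else (om β (σ a) (σ α))⁻¹) =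
      (∏ i, om β (σ α) (t i)) * lam (σ α) * ∏ a, if a = α then 1 else (om β (σ α) (σ a))⁻¹ := by
    intro α
    have e1 : (∏ a, if a = α then 1 else (om β (σ α) (σ a))⁻¹) =
        (∏ a, if a = α then 1 else -(1 + β * om β (σ a) (σ α))) *
          ∏ a, if a = α then 1 else (om β (σ a) (σ α))⁻¹ := by
      rw [← Finset.prod_mul_distrib]
      apply Finset.prod_congr rfl; intro a _
      by_cases h : a = α
      · simp [h]
      · simp only [h, if_false]
        have n1 := om_ne (hg a) (hinj _ _ (Ne.symm h))
        have n2 := om_ne (hg α) (hinj _ _ h)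
        have := om_swap β (σ a) (σ α) (hg _) (hg _)
        rw [eq_mul_inv_iff_mul_eq₀ n2, inv_mul_eq_iff_eq_mul₀ n1]
        linear_combination this
    rw [e1, prod_if_neg α _ (by simp [om])]
    have e2 : ((-1 : F) ^ (k - 1)) * (-1) ^ (k - 1) = 1 := by
      rw [← mul_pow]; simp
    linear_combination (-(-1 : F) ^ (k - 1) *
      (∏ a, if a = α then 1 else (om β (σ a) (σ α))⁻¹)) * hB α -
      (b 0 * (∏ a, if a = α then 1 else (om β (σ a) (σ α))⁻¹)) * e2
  have q2 : b 0 • ∑ α, ((om β (σ α) u)⁻¹ * ∏ a, if a = α then 1 else (om β (σ a) (σ α))⁻¹) •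
            ∑ i, Tn β N t u 0 (Fin.succ i) (W α i ψ) +
      ∑ i : Fin m, b i.succ • ∑ α, (((1 + β * om β u (σ α)) * (om β u (σ α))⁻¹) *
        ((∏ i, om β (σ α) (t i)) *
              ∏ a, if a = α then 1 else (om β (σ α) (σ a))⁻¹)) • Tn β N t u 0 i.succ (Z α i ψ) = 0 := by
    simp only [Finset.smul_sum]
    rw [Finset.sum_comm (s := (Finset.univ : Finset (Fin m))), ← Finset.sum_add_distrib]
    apply Finset.sum_eq_zero; intro α _
    rw [← Finset.sum_add_distrib]
    apply Finset.sum_eq_zero; intro i _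
    have e1 := congrArg (Tn β N t u 0 i.succ) (hW α i)
    rw [map_smul, map_smul] at e1
    have e2 : (om β (σ α) u)⁻¹ = - ((1 + β * om β u (σ α)) * (om β u (σ α))⁻¹) := by
      rw [gD_eq (hg α), inv_om, ← neg_sub u, inv_neg, mul_neg]
    rw [e2]
    have c := coef α
    generalize (1 + β * om β u (σ α)) * (om β u (σ α))⁻¹ = g at *
    generalize (∏ a, if a = α then 1 else (om β (σ α) (σ a))⁻¹) = P at *
    generalize (∏ a, if a = α then 1 else (om β (σ a) (σ α))⁻¹) = Q at *
    generalize (∏ i, om β (σ α) (t i)) = d at *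
    linear_combination (norm := module) (g * d * P) • e1 - (g * c) • Tn β N t u 0 i.succ (W α i ψ)
  rw [q1, add_smul, mul_smul]
  rw [← sub_eq_zero] at q2 ⊢
  linear_combination (norm := module) -q2


theorem Phi_eq_sum [Field F] {n N m : ℕ} (M : F → Fin m → Matrix (Fin N → Fin n) (Fin N → Fin n) F)
    (Ω : (Fin N → Fin n) → F) (k : ℕ) (σ : Fin k → F) (ψ : (Fin k → Fin m) → F) :
    Phi (fun v s => (M v s).mulVecLin) Ω k σ ψ =
      ∑ i, ψ i • ((List.ofFn fun a => M (σ a) (i a)).prod).mulVec Ω := by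
  induction k with
  | zero =>
    rw [Fintype.sum_eq_single (fun i : Fin 0 => i.elim0)]
    · simp [Phi]
    · intro x hx; exact absurd (Subsingleton.elim _ _) hx
  | succ k ih =>
    obtain ⟨x, σ', rfl⟩ : ∃ x σ', σ = Fin.cons x σ' :=
      ⟨σ 0, Fin.tail σ, (Fin.cons_self_tail σ).symm⟩
    rw [Phi_succ]
    have h : ∀ f : (Fin (k + 1) → Fin m) → ((Fin N → Fin n) → F),
        ∑ y, f y = ∑ s, ∑ ss : Fin k → Fin m, f (Fin.cons s ss) := by
      intro f
      ext r
      simp only [Finset.sum_apply]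
      exact sum_cons (fun y => f y r)
    rw [h]
    apply Finset.sum_congr rfl; intro s _
    rw [ih, map_sum]
    apply Finset.sum_congr rfl; intro ss _
    simp [List.ofFn_succ, sl, LinearMap.funLeft_apply, Matrix.mulVec_mulVec]

theorem psi_succ [Field F] (β : F) (k : ℕ → ℕ) (σ : (l : ℕ) → Fin (k l) → F) (j m : ℕ) :
    psi β k σ (j + 1) m = Phi (fun v (s : Fin (j + 2)) => Tn β (k m) (σ m) v 0 s.succ)
      (ket (j + 3) (k m) fun _ => 0) (k (m + 1)) (σ (m + 1)) (psi β k σ j (m + 1)) := by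
  have h := Phi_eq_sum (fun v (s : Fin (j + 2)) => blockOp (j + 3) (k m) β v (σ m) 0 s.succ)
    (ket (j + 3) (k m) fun _ => 0) (k (m + 1)) (σ (m + 1)) (psi β k σ j (m + 1))
  unfold Tn
  rw [h]
  ext s
  simp [psi, Finset.sum_apply]

theorem psi_base [Field F] (β : F) (k : ℕ → ℕ) (σ : (l : ℕ) → Fin (k l) → F) (m : ℕ) :
    psi β k σ 0 m = Phi (fun v (s : Fin 1) => Tn β (k m) (σ m) v 0 s.succ)
      (ket 2 (k m) fun _ => 0) (k (m + 1)) (σ (m + 1)) (fun _ => 1) := by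
  have h := Phi_eq_sum (fun v (s : Fin 1) => blockOp 2 (k m) β v (σ m) 0 s.succ)
    (ket 2 (k m) fun _ => 0) (k (m + 1)) (σ (m + 1)) (fun _ => 1)
  unfold Tn
  rw [h, Fintype.sum_eq_single (fun _ => 0)]
  · simp [psi]
  · intro x hx; exact absurd (Subsingleton.elim _ _) hx

theorem Tn_one [Field F] (β : F) (k : ℕ) (σ : Fin k → F) (u : F) (ψ : (Fin k → Fin 1) → F) :
    Tn β k σ u 0 0 ψ = ψ := by
  induction k with
  | zero => rw [Tn_zero]; simp
  | succ k ih =>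
    obtain ⟨x, σ', rfl⟩ : ∃ x σ', σ = Fin.cons x σ' :=
      ⟨σ 0, Fin.tail σ, (Fin.cons_self_tail σ).symm⟩
    apply eq_of_sl
    intro s
    rw [sl_Tn]
    have hs : s = 0 := Subsingleton.elim _ _
    subst hs
    simp [pc, qc, ih]

theorem transferM_eq [Field F] (n N : ℕ) (β u : F) (t : Fin N → F) (b : Fin n → F)
    (ψ : (Fin N → Fin n) → F) :
    (transferM n N β u t b).mulVec ψ = ∑ i, b i • Tn β N t u i i ψ := by
  have : transferM n N β u t b = ∑ a, b a • blockOp n N β u t a a := by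
    ext s s'
    simp [transferM, blockOp, Matrix.sum_apply]
  rw [this, Matrix.sum_mulVec]
  simp only [Matrix.smul_mulVec]
  rfl

/-! ### Polynomial dependence on the spectral parameter -/

/-- `f` is a polynomial function. -/
def SpecPoly [Field F] (f : F → F) : Prop := ∃ P : Polynomial F, ∀ u, f u = P.eval u

theorem SpecPoly.const [Field F] (a : F) : SpecPoly (fun _ : F => a) :=
  ⟨Polynomial.C a, by simp⟩

theorem SpecPoly.id [Field F] : SpecPoly (fun u : F => u) := ⟨Polynomial.X, by simp⟩

theorem SpecPoly.plus [Field F] {f g : F → F} (hf : SpecPoly f) (hg : SpecPoly g) :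
    SpecPoly (fun u => f u + g u) := by
  obtain ⟨P, hP⟩ := hf
  obtain ⟨Q, hQ⟩ := hg
  exact ⟨P + Q, by simp [hP, hQ]⟩

theorem SpecPoly.times [Field F] {f g : F → F} (hf : SpecPoly f) (hg : SpecPoly g) :
    SpecPoly (fun u => f u * g u) := by
  obtain ⟨P, hP⟩ := hf
  obtain ⟨Q, hQ⟩ := hg
  exact ⟨P * Q, by simp [hP, hQ]⟩

theorem SpecPoly.sum [Field F] {ι : Type*} (s : Finset ι) {f : ι → F → F}
    (hf : ∀ i, SpecPoly (f i)) : SpecPoly (fun u => ∑ i ∈ s, f i u) := by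
  choose P hP using hf
  exact ⟨∑ i ∈ s, P i, by simp [hP, Polynomial.eval_finset_sum]⟩

theorem SpecPoly.om [Field F] (β y : F) : SpecPoly (fun u => om β u y) := by
  have := (SpecPoly.id.plus (SpecPoly.const (-y))).times (SpecPoly.const (1 + β * y)⁻¹)
  simpa only [_root_.om, div_eq_mul_inv, sub_eq_add_neg] using this

theorem SpecPoly.tmono [Field F] (n N : ℕ) (β : F) (t : Fin N → F) (r c : Fin n)
    (s s' : Fin N → Fin n) : SpecPoly (fun u => Tmono n N β u t (r, s) (c, s')) := by
  induction N generalizing r c with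
  | zero => simpa only [Tmono_zero] using SpecPoly.const _
  | succ N ih =>
    have h : ∀ u, Tmono n (N + 1) β u t (r, s) (c, s') = _ := fun u => by
      have := Tmono_succ n N β u t r c (s 0) (s' 0) (Fin.tail s) (Fin.tail s')
      simpa only [Fin.cons_self_tail] using this
    simp only [h]
    apply SpecPoly.sum
    intro d
    apply SpecPoly.times (ih _ _ _ _ _)
    simp only [Rmat, Matrix.of_apply]
    apply SpecPoly.plus
    · split_ifs
      · exact (SpecPoly.const 1).plus ((SpecPoly.const β).times (SpecPoly.om β _))
      · exact SpecPoly.const _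
      · exact SpecPoly.const _
    · split_ifs
      · exact SpecPoly.om β _
      · exact SpecPoly.const _

theorem SpecPoly.eq_zero [Field F] [CharZero F] {f : F → F} (hf : SpecPoly f) (S : Set F)
    (hS : S.Finite) (h : ∀ u, u ∉ S → f u = 0) (u : F) : f u = 0 := by
  obtain ⟨P, hP⟩ := hf
  have : P = 0 := by
    apply Polynomial.eq_zero_of_infinite_isRoot
    have hi : Sᶜ.Infinite := hS.infinite_compl
    apply hi.mono
    intro v hv
    have := h v hv
    rw [hP] at this
    exact this
  rw [hP, this]
  simp

theorem extend [Field F] [CharZero F] (n N : ℕ) (β : F) (t : Fin N → F) (b : Fin n → F)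
    (ψ : (Fin N → Fin n) → F) (S : Set F) (hS : S.Finite) (L : F → F)
    (h : ∀ u, u ∉ S → (transferM n N β u t b).mulVec ψ = L u • ψ) :
    ∃ L' : F → F, (∀ u, (transferM n N β u t b).mulVec ψ = L' u • ψ) ∧
      ∀ u, u ∉ S → L' u = L u := by
  classical
  by_cases h0 : ψ = 0
  · exact ⟨L, by intro u; simp [h0], fun _ _ => rfl⟩
  obtain ⟨s, hs⟩ : ∃ s, ψ s ≠ 0 := by
    by_contra hc
    push Not at hc
    exact h0 (funext hc)
  have hp : ∀ r, SpecPoly (fun u => (transferM n N β u t b).mulVec ψ r) := by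
    intro r
    simp only [Matrix.mulVec, dotProduct, transferM, Matrix.of_apply]
    exact SpecPoly.sum _ fun s' => SpecPoly.times (SpecPoly.sum _ fun a =>
      (SpecPoly.const _).times (SpecPoly.tmono _ _ _ _ _ _ _ _)) (SpecPoly.const _)
  have key : ∀ r u, (transferM n N β u t b).mulVec ψ r * ψ s +
      (-ψ r) * (transferM n N β u t b).mulVec ψ s = 0 := by
    intro r
    apply SpecPoly.eq_zero (((hp r).times (SpecPoly.const _)).plus ((SpecPoly.const _).times (hp s))) S hS
    intro u hu
    rw [h u hu]
    simp only [Pi.smul_apply, smul_eq_mul]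
    ring
  refine ⟨fun u => (transferM n N β u t b).mulVec ψ s / ψ s, ?_, ?_⟩
  · intro u
    ext r
    simp only [Pi.smul_apply, smul_eq_mul]
    rw [div_mul_eq_mul_div, eq_div_iff hs]
    linear_combination key r u
  · intro u hu
    simp only [h u hu, Pi.smul_apply, smul_eq_mul]
    rw [mul_div_cancel_right₀ _ hs]

theorem step [Field F] [CharZero F] (m N : ℕ) (β : F) (t : Fin N → F)
    (ht : ∀ a, 1 + β * t a ≠ 0)
    (b : Fin (m + 1) → F) (k : ℕ) (σ : Fin k → F) (hg : ∀ a, 1 + β * σ a ≠ 0)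
    (hinj : ∀ a c, a ≠ c → σ a ≠ σ c) (hcr : ∀ a c, σ a ≠ t c)
    (ψ : (Fin k → Fin m) → F) (lam : F → F)
    (hψ : ∀ u, ∑ i : Fin m, b i.succ • Tn β k σ u i i ψ = lam u • ψ)
    (hB : ∀ α, (∏ a, (1 + β * om β (σ a) (σ α))) * (∏ i, om β (σ α) (t i)) * lam (σ α) =
      (-1) ^ (k - 1) * b 0) :
    ∃ L : F → F, (∀ u, (transferM (m + 1) N β u t b).mulVec
        (Phi (fun v (s : Fin m) => Tn β N t v 0 s.succ) (ket (m + 1) N fun _ => 0) k σ ψ) =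
      L u • Phi (fun v (s : Fin m) => Tn β N t v 0 s.succ) (ket (m + 1) N fun _ => 0) k σ ψ) ∧
      ∀ α, L (t α) = b 0 * ∏ a, (om β (σ a) (t α))⁻¹ := by
  have hS : ({-β⁻¹} ∪ Set.range σ : Set F).Finite :=
    (Set.finite_singleton _).union (Set.finite_range σ)
  have hgood : ∀ u, 1 + β * u ≠ 0 ∨ u = -β⁻¹ := by
    intro u
    by_cases h : 1 + β * u = 0
    · right
      have hb : β ≠ 0 := by rintro rfl; simp at h
      field_simp
      linear_combination h
    · exact Or.inl h
  by_cases hβ : β = 0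
  · obtain ⟨L, h1, h2⟩ := extend (m + 1) N β t b _ (Set.range σ) (Set.finite_range σ) _
      (fun u hu => level m N β t ht b k σ hg hinj ψ lam hψ hB u (by simp [hβ])
        (fun a h => hu ⟨a, h.symm⟩))
    refine ⟨L, h1, fun α => ?_⟩
    rw [h2 _ (by rintro ⟨a, ha⟩; exact hcr a α ha)]
    have : ∏ i, om β (t α) (t i) = 0 :=
      Finset.prod_eq_zero (Finset.mem_univ α) (by simp [om])
    rw [this]; ring
  · obtain ⟨L, h1, h2⟩ := extend (m + 1) N β t b _ _ hS _
      (fun u hu => level m N β t ht b k σ hg hinj ψ lam hψ hB u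
        ((hgood u).resolve_right fun h => hu (Or.inl h))
        (fun a h => hu (Or.inr ⟨a, h.symm⟩)))
    refine ⟨L, h1, fun α => ?_⟩
    rw [h2]
    · have : ∏ i, om β (t α) (t i) = 0 :=
        Finset.prod_eq_zero (Finset.mem_univ α) (by simp [om])
      rw [this]; ring
    · rintro (h | ⟨a, ha⟩)
      · apply ht α
        rw [Set.mem_singleton_iff] at h
        rw [h]; simp [hβ]
      · exact hcr a α ha


/-- **Bethe ansatz equations ⇒ eigenstate** (Theorem `BAE`).  Here `n = p+3 ≥ 3`,
`k 0 = N`, `σ 0 = t` (the equivariant parameters), `k n = 0`, and `q_m = b_{m-1}/b_m`.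
If the Bethe ansatz equations hold for the parameters `σ^{(m)}_α` (`1 ≤ m ≤ n-1`),
then the nested Bethe ansatz state `ψ^{(0)}` is a common eigenvector of the
transfer matrices `t^{(n)}(u)`. -/
theorem bethe_ansatz_eigenstate [Field F] [CharZero F] (p : ℕ) (β : F) (b : ℕ → F)
    (k : ℕ → ℕ) (σ : (l : ℕ) → Fin (k l) → F)
    (hN : 1 ≤ k 0)
    (hk : ∀ m, 1 ≤ m → m ≤ p + 2 → 1 ≤ k m)
    (hktop : k (p + 3) = 0)
    (hb : ∀ m, m ≤ p + 2 → b m ≠ 0)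
    (hden : ∀ m, m ≤ p + 2 → ∀ a, 1 + β * σ m a ≠ 0)
    (hdist : ∀ m, 1 ≤ m → m ≤ p + 2 → ∀ a c, a ≠ c → σ m a ≠ σ m c)
    (hcross : ∀ m, m ≤ p + 1 → ∀ (a : Fin (k (m + 1))) (c : Fin (k m)),
      σ (m + 1) a ≠ σ m c)
    (hBAE : ∀ m, 1 ≤ m → m ≤ p + 2 → ∀ α : Fin (k m),
      (∏ a : Fin (k m), (1 + β * om β (σ m a) (σ m α))) *
          (∏ i : Fin (k (m - 1)), om β (σ m α) (σ (m - 1) i)) =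
        (-1) ^ (k m - 1) * (b (m - 1) / b m) *
          ∏ c : Fin (k (m + 1)), om β (σ (m + 1) c) (σ m α)) :
    ∃ Λ : F → F, ∀ u : F,
      Matrix.mulVec (transferM (p + 3) (k 0) β u (σ 0) fun a => b (a : ℕ))
          (psi β k σ (p + 1) 0) =
        Λ u • psi β k σ (p + 1) 0 := by
  have claim : ∀ j m, m + j = p + 1 → ∃ L : F → F,
      (∀ u, (transferM (j + 2) (k m) β u (σ m) fun a => b (m + (a : ℕ))).mulVec (psi β k σ j m) =
        L u • psi β k σ j m) ∧
      ∀ α, L (σ m α) = b m * ∏ c, (om β (σ (m + 1) c) (σ m α))⁻¹ := by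
    intro j
    induction j with
    | zero =>
      intro m hm
      obtain rfl : m = p + 1 := by omega
      rw [psi_base]
      have := step 1 (k (p + 1)) β (σ (p + 1)) (hden _ (by omega))
        (fun a : Fin 2 => b (p + 1 + (a : ℕ))) (k (p + 2)) (σ (p + 2)) (hden _ (by omega))
        (hdist _ (by omega) (by omega)) (hcross _ (by omega)) (fun _ => 1)
        (fun _ => b (p + 2))
        (by
          intro u
          simp [Tn_one, add_assoc])
        (by
          intro α
          have h := hBAE (p + 2) (by omega) (by omega) α
          have hb' := hb (p + 2) (by omega)
          have e : ∏ c : Fin (k (p + 2 + 1)), om β (σ (p + 2 + 1) c) (σ (p + 2) α) = 1 := by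
            have : IsEmpty (Fin (k (p + 2 + 1))) := by
              have : k (p + 2 + 1) = 0 := hktop
              rw [this]
              exact Fin.isEmpty
            exact Fintype.prod_empty _
          rw [e] at h
          have h' := congrArg (fun z => z * b (p + 2)) h
          simp only [mul_one] at h'
          refine h'.trans ?_
          rw [mul_assoc, div_mul_cancel₀ _ hb']
          simp)
      simpa using this
    | succ j ih =>
      intro m hm
      obtain ⟨lam, l1, l2⟩ := ih (m + 1) (by omega)
      rw [psi_succ]
      have := step (j + 2) (k m) β (σ m) (hden _ (by omega))
        (fun a : Fin (j + 3) => b (m + (a : ℕ))) (k (m + 1)) (σ (m + 1)) (hden _ (by omega))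
        (hdist _ (by omega) (by omega)) (hcross _ (by omega)) (psi β k σ j (m + 1)) lam
        (by
          intro u
          rw [← l1 u, transferM_eq]
          apply Finset.sum_congr rfl; intro i _
          congr 2
          simp only [Fin.val_succ]
          omega)
        (by
          intro α
          have h := hBAE (m + 1) (by omega) (by omega) α
          have hb' := hb (m + 1) (by omega)
          have hne : (∏ c, om β (σ (m + 1 + 1) c) (σ (m + 1) α)) ≠ 0 :=
            Finset.prod_ne_zero_iff.mpr fun c _ =>
              om_ne (hden _ (by omega) _) (hcross (m + 1) (by omega) c α)
          rw [l2, Finset.prod_inv_distrib]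
          have h' := congrArg (fun z => z * (b (m + 1) *
            (∏ c, om β (σ (m + 1 + 1) c) (σ (m + 1) α))⁻¹)) h
          refine h'.trans ?_
          simp only [Nat.add_sub_cancel, Fin.val_zero, add_zero]
          field_simp)
      simpa using this
  obtain ⟨L, hL, -⟩ := claim (p + 1) 0 (by omega)
  refine ⟨L, fun u => ?_⟩
  simpa using hL u
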